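/- Let G be a finite abelian group with exp(G) ≥ 3, let k ∈ ℕ₀, and let n_1, n_2, n_3 be integers with 3 ≤ n_i ≤ |G| + 1 for i = 1, 2, 3. Then SD_k(G ⊕ C_{n_1} ⊕ C_{n_2} ⊕ C_{n_3}) ≥ SD_{k+3}(G) + (n_1 − 1) + (n_2 − 1) + (n_3 − 1). -/

import Mathlib

open Multiset

/-- A sequence (finite multiset) over `G` is zero-sumfree if every nonempty
subsequence has nonzero sum. -/
def IsZeroSumfree {G : Type*} [AddCommMonoid G] (S : Multiset G) : Prop :=
  ∀ T ≤ S, T ≠ 0 → T.sum ≠ 0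

/-- A minimal zero-sum sequence: a nonempty sequence with sum zero all of whose
nonempty proper subsequences have nonzero sum. -/
def IsMinimalZeroSum {G : Type*} [AddCommMonoid G] (S : Multiset G) : Prop :=
  S ≠ 0 ∧ S.sum = 0 ∧ ∀ T ≤ S, T ≠ 0 → T ≠ S → T.sum ≠ 0

/-- The cumulated multiplicity of level `ℓ` of a sequence:
`cm_ℓ(S) = Σ_{g ∈ G} max {0, v_g(S) − ℓ}`. -/
noncomputable def cmul {G : Type*} [AddCommMonoid G] (ℓ : ℕ) (S : Multiset G) : ℕ :=
  letI := Classical.decEq G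
  ∑ g ∈ S.toFinset, (S.count g - ℓ)

/-- `SD_{(k,ℓ)}(G)`: the maximum length of a minimal zero-sum sequence `S` over `G`
with `cm_ℓ(S) ≤ k`. -/
noncomputable def SDpair (G : Type*) [AddCommMonoid G] (k ℓ : ℕ) : ℕ :=
  sSup {m | ∃ S : Multiset G, IsMinimalZeroSum S ∧ cmul ℓ S ≤ k ∧ Multiset.card S = m}

/-- `SD_k(G)`: the `k`-th Strong Davenport constant. -/
noncomputable def SDk (G : Type*) [AddCommMonoid G] (k : ℕ) : ℕ := SDpair G k 1

/-- The Strong Davenport constant `SD(G) = SD_0(G)`. -/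
noncomputable def SD (G : Type*) [AddCommMonoid G] : ℕ := SDk G 0

/-- The Olson constant `Ol(G) = SD_1(G)`. -/
noncomputable def Ol (G : Type*) [AddCommMonoid G] : ℕ := SDk G 1

/-- `ol_k(G)`: the maximum length of a zero-sumfree sequence `S` over `G` with
`cm(S) ≤ k`. -/
noncomputable def olk (G : Type*) [AddCommMonoid G] (k : ℕ) : ℕ :=
  sSup {m | ∃ S : Multiset G, IsZeroSumfree S ∧ cmul 1 S ≤ k ∧ Multiset.card S = m}

/-- `Ol_k(G)`: the smallest integer `ℓ` such that every sequence `S` over `G` with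
`cm(S) ≤ k` and `|S| ≥ ℓ` has a nonempty zero-sum subsequence. -/
noncomputable def Olk (G : Type*) [AddCommMonoid G] (k : ℕ) : ℕ :=
  sInf {m | ∀ S : Multiset G, cmul 1 S ≤ k → m ≤ Multiset.card S →
    ∃ T, T ≤ S ∧ T ≠ 0 ∧ T.sum = 0}

/-- The Davenport constant `D(G)`: the maximum length of a minimal zero-sum
sequence over `G`. -/
noncomputable def DavenportD (G : Type*) [AddCommMonoid G] : ℕ :=
  sSup {m | ∃ S : Multiset G, IsMinimalZeroSum S ∧ Multiset.card S = m}

/-! Helper lemmas. -/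

theorem aux_cm {G : Type*} [AddCommMonoid G] (S : Multiset G) :
    letI := Classical.decEq G
    cmul 1 S + S.toFinset.card = Multiset.card S := by
  letI := Classical.decEq G
  have h : ∀ g ∈ S.toFinset, (S.count g - 1) + 1 = S.count g := by
    intro g hg
    have := Multiset.count_pos.2 (Multiset.mem_toFinset.1 hg)
    omega
  unfold cmul
  rw [← Multiset.toFinset_sum_count_eq S, Finset.card_eq_sum_ones, ← Finset.sum_add_distrib]
  exact Finset.sum_congr rfl h

theorem aux_bdd (G : Type*) [AddCommMonoid G] [Finite G] (k : ℕ) :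
    BddAbove {m | ∃ S : Multiset G, IsMinimalZeroSum S ∧ cmul 1 S ≤ k ∧ Multiset.card S = m} := by
  classical
  haveI := Fintype.ofFinite G
  refine ⟨k + Fintype.card G, ?_⟩
  rintro m ⟨S, -, hk, rfl⟩
  have h := aux_cm S
  have h2 := Finset.card_le_univ (@Multiset.toFinset _ (Classical.decEq G) S)
  omega

theorem aux_pick {G : Type*} [AddCommMonoid G] (S : Multiset G) (hS : S ≠ 0) :
    ∃ g S', S = g ::ₘ S' ∧ cmul 1 S' ≤ cmul 1 S - 1 := by
  letI := Classical.decEq G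
  by_cases hn : S.Nodup
  · obtain ⟨g, hg⟩ := Multiset.exists_mem_of_ne_zero hS
    obtain ⟨S', rfl⟩ := Multiset.exists_cons_of_mem hg
    refine ⟨g, S', rfl, ?_⟩
    have h1 := aux_cm S'
    have h2 := Multiset.toFinset_card_of_nodup (Multiset.nodup_cons.1 hn).2
    omega
  · rw [Multiset.nodup_iff_ne_cons_cons] at hn
    push Not at hn
    obtain ⟨a, t, rfl⟩ := hn
    refine ⟨a, a ::ₘ t, rfl, ?_⟩
    have h1 := aux_cm (a ::ₘ t)
    have h2 := aux_cm (a ::ₘ a ::ₘ t)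
    simp only [Multiset.toFinset_cons, Finset.insert_idem, Multiset.card_cons] at h1 h2
    omega

theorem aux_cm_add {G : Type*} [AddCommMonoid G] (A W : Multiset G) (hW : W.Nodup)
    (hd : ∀ x ∈ A, x ∉ W) : cmul 1 (A + W) ≤ cmul 1 A := by
  letI := Classical.decEq G
  have h1 := aux_cm A
  have h2 := aux_cm (A + W)
  have h3 := Multiset.toFinset_card_of_nodup hW
  have h4 : (A + W).toFinset.card = A.toFinset.card + W.toFinset.card := by
    rw [Multiset.toFinset_add, Finset.card_union_of_disjoint]
    rw [Finset.disjoint_left]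
    intro x hx
    simpa using hd x (by simpa using hx)
  simp only [Multiset.card_add] at h1 h2
  omega

theorem aux_cm_map {G K : Type*} [AddCommMonoid G] [AddCommMonoid K] (f : G → K)
    (hf : Function.Injective f) (A : Multiset G) : cmul 1 (A.map f) = cmul 1 A := by
  letI := Classical.decEq G
  letI := Classical.decEq K
  have h1 := aux_cm A
  have h2 := aux_cm (A.map f)
  have h4 : (A.map f).toFinset.card = A.toFinset.card := by
    rw [Multiset.toFinset_map, Finset.card_image_of_injective _ hf]
  simp only [Multiset.card_map] at h1 h2
  omega

theorem aux_le_add {K : Type*} {T A B : Multiset K} (h : T ≤ A + B) :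
    ∃ A' B', A' ≤ A ∧ B' ≤ B ∧ T = A' + B' := by
  classical
  refine ⟨T ∩ A, T - A, Multiset.inter_le_right, ?_, ?_⟩
  · rw [tsub_le_iff_left]; exact h
  · ext x
    simp only [Multiset.count_add, Multiset.count_inter, Multiset.count_sub]
    omega

theorem aux_le_map {G K : Type*} (f : G → K) {T : Multiset K} {A : Multiset G}
    (h : T ≤ A.map f) : ∃ A' ≤ A, T = A'.map f := by
  induction A using Multiset.induction generalizing T with
  | empty =>
    refine ⟨0, le_rfl, ?_⟩
    simpa using h
  | cons a A ih =>
    rw [Multiset.map_cons, ← Multiset.singleton_add] at h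
    obtain ⟨X, Y, hX, hY, rfl⟩ := aux_le_add h
    obtain ⟨A', hA', rfl⟩ := ih hY
    rcases Multiset.le_singleton.1 hX with rfl | rfl
    · exact ⟨A', hA'.trans (Multiset.le_cons_self _ _), by simp⟩
    · exact ⟨a ::ₘ A', Multiset.cons_le_cons _ hA', by simp⟩

theorem aux_le_single {K : Type*} {T : Multiset K} {f : K}
    (h : T ≤ {f}) : ∃ p : ℕ, p ≤ 1 ∧ T = p • ({f} : Multiset K) := by
  rcases Multiset.le_singleton.1 h with rfl | rfl
  · exact ⟨0, by simp⟩
  · exact ⟨1, by simp⟩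

/-- One swap step of the subset sum lemma. -/
theorem aux_step {G : Type*} [AddCommGroup G] [Fintype G] (A : Finset G)
    (hA : A.Nonempty) (hA' : ∃ x, x ∉ A) (d : G) (hd : d + d ≠ 0) :
    ∃ B : Finset G, B.card = A.card ∧ ∑ x ∈ B, x = ∑ x ∈ A, x + d := by
  classical
  have hd0 : d ≠ 0 := by rintro rfl; simp at hd
  have swap1 : ∀ (A : Finset G) (a b : G), a ∈ A → b ∉ A →
      (insert b (A.erase a)).card = A.card ∧
        ∑ x ∈ insert b (A.erase a), x = ∑ x ∈ A, x - a + b := by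
    intro A a b ha hb
    have hb' : b ∉ A.erase a := fun h => hb (Finset.mem_of_mem_erase h)
    constructor
    · rw [Finset.card_insert_of_notMem hb', Finset.card_erase_of_mem ha]
      have := Finset.card_pos.2 ⟨a, ha⟩
      omega
    · rw [Finset.sum_insert hb', ← Finset.add_sum_erase A _ ha]
      abel
  have swap2 : ∀ (a a' b b' : G), a ∈ A → a' ∈ A → a ≠ a' → b ∉ A → b' ∉ A → b ≠ b' →
      b + b' = a + a' + d →
      ∃ B : Finset G, B.card = A.card ∧ ∑ x ∈ B, x = ∑ x ∈ A, x + d := by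
    intro a a' b b' ha ha' haa hb hb' hbb h
    obtain ⟨h1, h2⟩ := swap1 A a b ha hb
    have m1 : a' ∈ insert b (A.erase a) := by
      simp [ha', haa.symm]
    have m2 : b' ∉ insert b (A.erase a) := by
      simp [hb', hbb.symm]
    obtain ⟨h3, h4⟩ := swap1 _ a' b' m1 m2
    refine ⟨_, h3.trans h1, ?_⟩
    rw [h4, h2]
    have : d = b + b' - (a + a') := by rw [h]; abel
    rw [this]; abel
  by_cases hc : ∃ a ∈ A, a + d ∉ A
  · obtain ⟨a, ha, hb⟩ := hc
    obtain ⟨h1, h2⟩ := swap1 A a (a + d) ha hb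
    exact ⟨_, h1, by rw [h2]; abel⟩
  push Not at hc
  -- the complement is closed under subtraction of d, and `A` too
  have himg : A.image (· + d) = A := by
    apply Finset.eq_of_subset_of_card_le
    · intro x hx
      obtain ⟨a, ha, rfl⟩ := Finset.mem_image.1 hx
      exact hc a ha
    · rw [Finset.card_image_of_injective _ (add_left_injective d)]
  have hper : ∀ x, x + d ∈ A ↔ x ∈ A := by
    intro x
    refine ⟨fun h => ?_, hc x⟩
    rw [← himg] at h
    obtain ⟨a, ha, h⟩ := Finset.mem_image.1 h
    rwa [← add_right_cancel h]
  have hper' : ∀ x, x - d ∈ A ↔ x ∈ A := by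
    intro x
    rw [← hper (x - d), sub_add_cancel]
  by_cases h1 : ∃ c ∈ A, ∃ c', c' ∉ A ∧ c + c - c' ∉ A
  · obtain ⟨c, hcA, c', hc', hr⟩ := h1
    by_cases he : c' = c + c - c' + d + d
    · refine swap2 c (c - d) c' (c + c - c') hcA ((hper' _).2 hcA) ?_ hc' hr ?_ ?_
      · intro h; exact hd0 (sub_eq_self.1 h.symm)
      · intro h
        apply hd
        have h2 := he.symm.trans h
        rw [add_assoc] at h2
        exact add_eq_left.1 h2
      · abel
    · refine swap2 c (c + d) c' (c + c - c' + d + d) hcA ((hper _).2 hcA) ?_ hc' ?_ he ?_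
      · intro h; exact hd0 (by simpa using h)
      · rw [hper, hper]; exact hr
      · abel
  by_cases h2 : ∃ c ∈ A, ∃ c', c' ∉ A ∧ c' + c' - c ∈ A
  · obtain ⟨c, hcA, c', hc', hr⟩ := h2
    by_cases he : c = c' + c' - c - d - d
    · refine swap2 c (c' + c' - c) c' (c' + d) hcA hr ?_ hc' ?_ ?_ ?_
      · intro h
        apply hd
        have h2 := he.symm.trans h
        rw [sub_sub] at h2
        exact sub_eq_self.1 h2
      · rw [hper]; exact hc'
      · intro h; exact hd0 (by simpa using h)
      · abel
    · refine swap2 c (c' + c' - c - d - d) c' (c' - d) hcA ?_ he hc' ?_ ?_ ?_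
      · rw [hper', hper']; exact hr
      · rw [hper']; exact hc'
      · intro h; exact hd0 (sub_eq_self.1 h.symm)
      · abel
  exfalso
  push Not at h1 h2
  obtain ⟨c, hcA⟩ := hA
  obtain ⟨c', hc'⟩ := hA'
  have e1 : (Aᶜ).card < A.card := by
    rw [← Finset.card_image_of_injective Aᶜ (sub_right_injective (b := c + c))]
    apply Finset.card_lt_card
    refine ⟨?_, fun hsub => ?_⟩
    · intro x hx
      obtain ⟨y, hy, rfl⟩ := Finset.mem_image.1 hx
      exact h1 c hcA y (Finset.mem_compl.1 hy)
    · obtain ⟨y, hy, h⟩ := Finset.mem_image.1 (hsub hcA)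
      have : y = c := by
        have h' : c + c - y = c := h
        rw [sub_eq_iff_eq_add] at h'
        exact (add_left_cancel h').symm
      exact Finset.mem_compl.1 hy (this ▸ hcA)
  have e2 : A.card ≤ (Aᶜ).card := by
    rw [← Finset.card_image_of_injective A (sub_right_injective (b := c' + c'))]
    apply Finset.card_le_card
    intro x hx
    obtain ⟨y, hy, rfl⟩ := Finset.mem_image.1 hx
    exact Finset.mem_compl.2 (h2 y hy c' hc')
  omega

theorem aux_subset_sum {G : Type*} [AddCommGroup G] [Fintype G] (h : G) (hh : h + h ≠ 0)
    (m : ℕ) (hm : 1 ≤ m) (hm' : m < Fintype.card G) (t : G) :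
    ∃ B : Finset G, B.card = m ∧ ∑ x ∈ B, x = t := by
  have step : ∀ s d : G, d + d ≠ 0 → (∃ B : Finset G, B.card = m ∧ ∑ x ∈ B, x = s) →
      ∃ B : Finset G, B.card = m ∧ ∑ x ∈ B, x = s + d := by
    rintro s d hd ⟨A, hA, rfl⟩
    obtain ⟨B, h1, h2⟩ := aux_step A (Finset.card_pos.1 (by omega)) (by
      by_contra hcon
      push Not at hcon
      have : A = Finset.univ := Finset.eq_univ_iff_forall.2 hcon
      rw [this, Finset.card_univ] at hA
      omega) d hd
    exact ⟨B, h1.trans hA, h2⟩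
  obtain ⟨A, -, hA⟩ := Finset.exists_subset_card_eq (s := (Finset.univ : Finset G)) (n := m)
    (by rw [Finset.card_univ]; omega)
  have h0 : ∃ B : Finset G, B.card = m ∧ ∑ x ∈ B, x = ∑ x ∈ A, x := ⟨A, hA, rfl⟩
  set s := ∑ x ∈ A, x
  by_cases hd : (t - s) + (t - s) = 0
  · have := step _ (t - s - h) (by
      intro hz
      apply hh
      have : (t - s - h) + (t - s - h) = ((t - s) + (t - s)) - (h + h) := by abel
      rw [this, hd, zero_sub, neg_eq_zero] at hz
      exact hz) (step s h hh h0)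
    convert this using 4
    abel
  · have := step s (t - s) hd h0
    convert this using 4
    abel

theorem aux_exp {G : Type*} [AddCommGroup G] (hexp : 3 ≤ AddMonoid.exponent G) :
    ∃ h : G, h + h ≠ 0 := by
  by_contra hcon
  push Not at hcon
  have : AddMonoid.exponent G ∣ 2 :=
    AddMonoid.exponent_dvd_of_forall_nsmul_eq_zero (fun g => by rw [two_nsmul]; exact hcon g)
  have := Nat.le_of_dvd (by norm_num) this
  omega

theorem aux_three {G : Type*} [AddCommGroup G] (h : G) (hh : h + h ≠ 0) :
    IsMinimalZeroSum ({h, h, -(h + h)} : Multiset G) := by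
  have hsum : ({h, h, -(h + h)} : Multiset G).sum = 0 := by
    simp
  have h0 : h ≠ 0 := by rintro rfl; simp at hh
  have key : ∀ X : Multiset G, X ≤ ({h, h, -(h + h)} : Multiset G) → Multiset.card X = 1 →
      X.sum ≠ 0 := by
    intro X hX h1
    obtain ⟨x, rfl⟩ := Multiset.card_eq_one.1 h1
    have hx := Multiset.mem_of_le hX (Multiset.mem_singleton_self x)
    rw [Multiset.sum_singleton]
    simp only [Multiset.insert_eq_cons, Multiset.mem_cons, Multiset.mem_singleton] at hx
    rcases hx with rfl | rfl | rfl
    · exact h0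
    · exact h0
    · exact neg_ne_zero.2 hh
  refine ⟨by simp, hsum, ?_⟩
  intro T hT hT0 hTS hs
  obtain ⟨U, hU⟩ := Multiset.le_iff_exists_add.1 hT
  have hcard : Multiset.card T + Multiset.card U = 3 := by
    rw [← Multiset.card_add, ← hU]; simp
  have hU0 : U ≠ 0 := by
    rintro rfl
    exact hTS (by rw [hU, add_zero])
  have hUs : U.sum = 0 := by
    have := congrArg Multiset.sum hU
    rwa [hsum, Multiset.sum_add, hs, zero_add, eq_comm] at this
  have c1 := Multiset.card_pos.2 hT0
  have c2 := Multiset.card_pos.2 hU0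
  by_cases hc : Multiset.card T = 1
  · exact key T hT hc hs
  · exact key U (by rw [hU]; exact Multiset.le_add_left _ _) (by omega) hUs

theorem aux_sum_map {G A B C : Type*} [AddCommMonoid G] [AddCommMonoid A] [AddCommMonoid B]
    [AddCommMonoid C] (x : A) (y : B) (z : C) (X : Multiset G) :
    (X.map (fun b => (b, x, y, z))).sum =
      (X.sum, Multiset.card X • x, Multiset.card X • y, Multiset.card X • z) := by
  induction X using Multiset.induction with
  | empty => simp; rfl
  | cons a X ih =>
    rw [Multiset.map_cons, Multiset.sum_cons, ih, Multiset.sum_cons, Multiset.card_cons]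
    simp only [Prod.mk_add_mk, succ_nsmul']

theorem aux_zmod (n : ℕ) (hn : 3 ≤ n) (a p q r s : ℕ) (ha : a + p + q ≤ n) (hr : r ≤ 1)
    (hs : s ≤ 1) (h : (a : ZMod n) + p + q + r - s = 0) :
    a + p + q + r = s ∨ a + p + q + r = s + n := by
  have h2 : (((a + p + q + r : ℤ) - s : ℤ) : ZMod n) = 0 := by
    push_cast
    exact h
  rw [ZMod.intCast_zmod_eq_zero_iff_dvd] at h2
  obtain ⟨k, hk⟩ := h2
  have hk0 : 0 ≤ k := by
    by_contra hneg
    have : (n : ℤ) * k ≤ n * (-1) := by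
      apply mul_le_mul_of_nonneg_left <;> omega
    omega
  have hk1 : k ≤ 1 := by
    by_contra hneg
    have : (n : ℤ) * 2 ≤ n * k := by
      apply mul_le_mul_of_nonneg_left <;> omega
    omega
  have : k = 0 ∨ k = 1 := by omega
  rcases this with rfl | rfl
  · left; omega
  · right; omega

set_option maxHeartbeats 4000000 in
theorem aux_comb (n₁ n₂ n₃ a₁ a₂ a₃ p₁ q₁ p₂ q₂ p₃ q₃ : ℕ)
    (h₁ : 3 ≤ n₁) (h₂ : 3 ≤ n₂) (h₃ : 3 ≤ n₃)
    (ha₁ : a₁ ≤ n₁ - 2) (ha₂ : a₂ ≤ n₂ - 2) (ha₃ : a₃ ≤ n₃ - 2)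
    (hp₁ : p₁ ≤ 1) (hq₁ : q₁ ≤ 1) (hp₂ : p₂ ≤ 1) (hq₂ : q₂ ≤ 1) (hp₃ : p₃ ≤ 1) (hq₃ : q₃ ≤ 1)
    (e₁ : a₁ + p₁ + q₁ + p₃ = q₃ ∨ a₁ + p₁ + q₁ + p₃ = q₃ + n₁)
    (e₂ : a₂ + p₂ + q₂ + p₁ = q₁ ∨ a₂ + p₂ + q₂ + p₁ = q₁ + n₂)
    (e₃ : a₃ + p₃ + q₃ + p₂ = q₂ ∨ a₃ + p₃ + q₃ + p₂ = q₂ + n₃) :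
    (((p₁ = 0 ∧ q₁ = 0 ∧ a₁ = 0) ∨ (p₁ = 1 ∧ q₁ = 1 ∧ a₁ = n₁ - 2)) ∧
     ((p₂ = 0 ∧ q₂ = 0 ∧ a₂ = 0) ∨ (p₂ = 1 ∧ q₂ = 1 ∧ a₂ = n₂ - 2)) ∧
     ((p₃ = 0 ∧ q₃ = 0 ∧ a₃ = 0) ∨ (p₃ = 1 ∧ q₃ = 1 ∧ a₃ = n₃ - 2))) ∨
    (((p₁ = 1 ∧ q₁ = 0 ∧ a₂ = n₂ - 2) ∨ (p₁ = 0 ∧ q₁ = 1 ∧ a₂ = 0)) ∧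
     ((p₂ = 1 ∧ q₂ = 0 ∧ a₃ = n₃ - 2) ∨ (p₂ = 0 ∧ q₂ = 1 ∧ a₃ = 0)) ∧
     ((p₃ = 1 ∧ q₃ = 0 ∧ a₁ = n₁ - 2) ∨ (p₃ = 0 ∧ q₃ = 1 ∧ a₁ = 0))) := by
  obtain rfl | rfl : p₁ = 0 ∨ p₁ = 1 := by omega
  all_goals obtain rfl | rfl : q₁ = 0 ∨ q₁ = 1 := by omega
  all_goals obtain rfl | rfl : p₂ = 0 ∨ p₂ = 1 := by omega
  all_goals obtain rfl | rfl : q₂ = 0 ∨ q₂ = 1 := by omega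
  all_goals obtain rfl | rfl : p₃ = 0 ∨ p₃ = 1 := by omega
  all_goals obtain rfl | rfl : q₃ = 0 ∨ q₃ = 1 := by omega
  all_goals simp only [zero_ne_one, one_ne_zero, true_and, false_and, false_or, or_false, and_true,
    and_false, add_zero, zero_add]
  all_goals omega

/-- Subsums of a minimal zero-sum sequence with three marked terms. -/
theorem aux_marked {G : Type*} [AddCommMonoid G] (S₀ : Multiset G) (g₁ g₂ g₃ : G)
    (hS : IsMinimalZeroSum (S₀ + ({g₁} + {g₂} + {g₃}))) (R : Multiset G) (hR : R ≤ S₀)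
    (c₁ c₂ c₃ : ℕ) (h₁ : c₁ ≤ 1) (h₂ : c₂ ≤ 1) (h₃ : c₃ ≤ 1)
    (h : R.sum + (c₁ • g₁ + c₂ • g₂ + c₃ • g₃) = 0) :
    (R = 0 ∧ c₁ = 0 ∧ c₂ = 0 ∧ c₃ = 0) ∨ (R = S₀ ∧ c₁ = 1 ∧ c₂ = 1 ∧ c₃ = 1) := by
  have hle : ∀ (c : ℕ) (g : G), c ≤ 1 → c • ({g} : Multiset G) ≤ {g} := by
    intro c g hc
    interval_cases c <;> simp
  set V : Multiset G := R + (c₁ • {g₁} + c₂ • {g₂} + c₃ • {g₃}) with hV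
  have hVle : V ≤ S₀ + ({g₁} + {g₂} + {g₃}) :=
    add_le_add hR (add_le_add (add_le_add (hle _ _ h₁) (hle _ _ h₂)) (hle _ _ h₃))
  have hVs : V.sum = 0 := by
    simp only [hV, Multiset.sum_add, Multiset.sum_nsmul, Multiset.sum_singleton]
    exact h
  have hVc : Multiset.card V = Multiset.card R + (c₁ + c₂ + c₃) := by
    simp [hV]
  have hRc := Multiset.card_le_card hR
  by_cases h0 : V = 0
  · left
    rw [h0, Multiset.card_zero] at hVc
    exact ⟨Multiset.card_eq_zero.1 (by omega), by omega, by omega, by omega⟩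
  · right
    by_cases hf : V = S₀ + ({g₁} + {g₂} + {g₃})
    · rw [hf] at hVc
      simp only [Multiset.card_add, Multiset.card_singleton] at hVc
      exact ⟨Multiset.eq_of_le_of_card_le hR (by omega), by omega, by omega, by omega⟩
    · exact absurd hVs (hS.2.2 V hVle h0 hf)

/-- The part of the new sequence with nonzero cyclic components. -/
def auxW {G : Type*} [AddCommGroup G] (n₁ n₂ n₃ : ℕ) (g₁ g₃ : G) (B₁ B₂ B₃ : Multiset G) :
    Multiset (G × ZMod n₁ × ZMod n₂ × ZMod n₃) :=
  B₁.map (fun b => (b, 1, 0, 0)) + B₂.map (fun b => (b, 0, 1, 0)) +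
    B₃.map (fun b => (b, 0, 0, 1)) +
    {(0, 1, 1, 0)} + {(g₁, 1, -1, 0)} + {(-g₃, 0, 1, 1)} + {(0, 0, 1, -1)} +
    {(0, 1, 0, 1)} + {(0, -1, 0, 1)}

theorem auxW_nodup {G : Type*} [AddCommGroup G] (n₁ n₂ n₃ : ℕ) (h₁ : 3 ≤ n₁) (h₂ : 3 ≤ n₂)
    (h₃ : 3 ≤ n₃) (g₁ g₃ : G) (B₁ B₂ B₃ : Multiset G)
    (hB₁ : B₁.Nodup) (hB₂ : B₂.Nodup) (hB₃ : B₃.Nodup) :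
    (auxW n₁ n₂ n₃ g₁ g₃ B₁ B₂ B₃).Nodup ∧ ∀ x ∈ auxW n₁ n₂ n₃ g₁ g₃ B₁ B₂ B₃, x.2 ≠ 0 := by
  haveI : Fact (1 < n₁) := ⟨by omega⟩
  haveI : Fact (1 < n₂) := ⟨by omega⟩
  haveI : Fact (1 < n₃) := ⟨by omega⟩
  haveI : Fact (2 < n₁) := ⟨by omega⟩
  haveI : Fact (2 < n₂) := ⟨by omega⟩
  haveI : Fact (2 < n₃) := ⟨by omega⟩
  have m₁ := ZMod.neg_one_ne_one (n := n₁)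
  have m₂ := ZMod.neg_one_ne_one (n := n₂)
  have m₃ := ZMod.neg_one_ne_one (n := n₃)
  have i₁ : Function.Injective
      (fun b : G => ((b, 1, 0, 0) : G × ZMod n₁ × ZMod n₂ × ZMod n₃)) :=
    fun a b h => congrArg Prod.fst h
  have i₂ : Function.Injective
      (fun b : G => ((b, 0, 1, 0) : G × ZMod n₁ × ZMod n₂ × ZMod n₃)) :=
    fun a b h => congrArg Prod.fst h
  have i₃ : Function.Injective
      (fun b : G => ((b, 0, 0, 1) : G × ZMod n₁ × ZMod n₂ × ZMod n₃)) :=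
    fun a b h => congrArg Prod.fst h
  have z₁ : (1 : ZMod n₁) ≠ 0 := one_ne_zero
  have z₂ : (1 : ZMod n₂) ≠ 0 := one_ne_zero
  have z₃ : (1 : ZMod n₃) ≠ 0 := one_ne_zero
  have y₁ : (-1 : ZMod n₁) ≠ 0 := neg_ne_zero.2 z₁
  have y₂ : (-1 : ZMod n₂) ≠ 0 := neg_ne_zero.2 z₂
  have y₃ : (-1 : ZMod n₃) ≠ 0 := neg_ne_zero.2 z₃
  constructor
  · unfold auxW
    simp only [Multiset.nodup_add, Multiset.nodup_map_iff_of_injective i₁,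
      Multiset.nodup_map_iff_of_injective i₂, Multiset.nodup_map_iff_of_injective i₃,
      Multiset.nodup_singleton, hB₁, hB₂, hB₃, Multiset.disjoint_left]
    simp only [Multiset.mem_add, Multiset.mem_map, Multiset.mem_singleton, Prod.forall,
      Prod.mk.injEq, true_and, and_true]
    clear i₁ i₂ i₃
    repeat' apply And.intro
    all_goals intro a b c d
    all_goals grind
  · rintro ⟨a, b, c, d⟩ hx
    unfold auxW at hx
    simp only [Multiset.mem_add, Multiset.mem_map, Multiset.mem_singleton, Prod.mk.injEq] at hx
    simp only [ne_eq, Prod.mk_eq_zero]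
    grind

theorem aux_main {G : Type*} [AddCommGroup G] (n₁ n₂ n₃ : ℕ) (h₁ : 3 ≤ n₁) (h₂ : 3 ≤ n₂)
    (h₃ : 3 ≤ n₃) (S₀ : Multiset G) (g₁ g₂ g₃ : G)
    (hS : IsMinimalZeroSum (S₀ + ({g₁} + {g₂} + {g₃})))
    (B₁ B₂ B₃ : Multiset G)
    (c₁ : Multiset.card B₁ = n₁ - 2) (c₂ : Multiset.card B₂ = n₂ - 2)
    (c₃ : Multiset.card B₃ = n₃ - 2)
    (s₁ : B₁.sum = 0) (s₂ : B₂.sum = g₂ + g₃) (s₃ : B₃.sum = g₃) :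
    IsMinimalZeroSum (S₀.map (fun b => ((b, 0, 0, 0) : G × ZMod n₁ × ZMod n₂ × ZMod n₃)) +
      auxW n₁ n₂ n₃ g₁ g₃ B₁ B₂ B₃) := by
  have hn : ∀ n : ℕ, 3 ≤ n → ((n - 2 : ℕ) : ZMod n) = -2 := by
    intro n hn
    rw [Nat.cast_sub (by omega)]
    simp
  refine ⟨?_, ?_, ?_⟩
  · intro h
    have := congrArg Multiset.card h
    simp [auxW] at this
  · have hs := hS.2.1
    simp only [Multiset.sum_add, Multiset.sum_singleton] at hs
    simp only [auxW, Multiset.sum_add, aux_sum_map, Multiset.sum_singleton, c₁, c₂, c₃, s₁, s₂, s₃,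
      Prod.mk_add_mk, smul_zero, nsmul_one, hn _ h₁, hn _ h₂, hn _ h₃, Prod.mk_eq_zero]
    refine ⟨?_, by ring, by ring, by ring⟩
    refine Eq.trans ?_ hs
    abel
  · intro T hT hT0 hTS hs
    unfold auxW at hT
    obtain ⟨X, T1, hX1, hT1, rfl⟩ := aux_le_add hT
    obtain ⟨R, hR, rfl⟩ := aux_le_map _ hX1
    obtain ⟨T2, Q₃, hT2, hX2, rfl⟩ := aux_le_add hT1
    obtain ⟨q₃, hq₃, rfl⟩ := aux_le_single hX2
    obtain ⟨T3, P₃, hT3, hX3, rfl⟩ := aux_le_add hT2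
    obtain ⟨p₃, hp₃, rfl⟩ := aux_le_single hX3
    obtain ⟨T4, Q₂, hT4, hX4, rfl⟩ := aux_le_add hT3
    obtain ⟨q₂, hq₂, rfl⟩ := aux_le_single hX4
    obtain ⟨T5, P₂, hT5, hX5, rfl⟩ := aux_le_add hT4
    obtain ⟨p₂, hp₂, rfl⟩ := aux_le_single hX5
    obtain ⟨T6, Q₁, hT6, hX6, rfl⟩ := aux_le_add hT5
    obtain ⟨q₁, hq₁, rfl⟩ := aux_le_single hX6
    obtain ⟨T7, P₁, hT7, hX7, rfl⟩ := aux_le_add hT6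
    obtain ⟨p₁, hp₁, rfl⟩ := aux_le_single hX7
    obtain ⟨T8, X₃, hT8, hX8, rfl⟩ := aux_le_add hT7
    obtain ⟨A₃, hA₃, rfl⟩ := aux_le_map _ hX8
    obtain ⟨X₁, X₂, hT9, hX9, rfl⟩ := aux_le_add hT8
    obtain ⟨A₂, hA₂, rfl⟩ := aux_le_map _ hX9
    obtain ⟨A₁, hA₁, rfl⟩ := aux_le_map _ hT9
    simp only [Multiset.sum_add, aux_sum_map, Multiset.sum_singleton, Multiset.sum_nsmul,
      Prod.smul_mk, Prod.mk_add_mk, smul_zero, nsmul_one, Prod.mk_eq_zero, add_zero, zero_add,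
      smul_neg] at hs
    obtain ⟨hs, t₁, t₂, t₃⟩ := hs
    have k₁ := Multiset.card_le_card hA₁
    have k₂ := Multiset.card_le_card hA₂
    have k₃ := Multiset.card_le_card hA₃
    rw [c₁] at k₁
    rw [c₂] at k₂
    rw [c₃] at k₃
    have e₁ := aux_zmod n₁ h₁ (Multiset.card A₁) p₁ q₁ p₃ q₃ (by omega) hp₃ hq₃
      (by rw [← t₁]; ring)
    have e₂ := aux_zmod n₂ h₂ (Multiset.card A₂) p₂ q₂ p₁ q₁ (by omega) hp₁ hq₁
      (by rw [← t₂]; ring)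
    have e₃ := aux_zmod n₃ h₃ (Multiset.card A₃) p₃ q₃ p₂ q₂ (by omega) hp₂ hq₂
      (by rw [← t₃]; ring)
    have full : ∀ (A B : Multiset G) (n : ℕ), A ≤ B → Multiset.card B = n →
        Multiset.card A = n → A = B := by
      intro A B n hAB hB hA
      exact Multiset.eq_of_le_of_card_le hAB (by omega)
    have marked := aux_marked S₀ g₁ g₂ g₃ hS R hR
    rcases aux_comb n₁ n₂ n₃ _ _ _ p₁ q₁ p₂ q₂ p₃ q₃ h₁ h₂ h₃ k₁ k₂ k₃ hp₁ hq₁ hp₂ hq₂ hp₃ hq₃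
      e₁ e₂ e₃ with ⟨b₁, b₂, b₃⟩ | ⟨b₁, b₂, b₃⟩
    · have d₁ : p₁ = q₁ ∧ A₁ = p₁ • B₁ := by
        rcases b₁ with ⟨rfl, rfl, h⟩ | ⟨rfl, rfl, h⟩
        · exact ⟨rfl, by simpa using h⟩
        · exact ⟨rfl, by simpa using full _ _ _ hA₁ c₁ h⟩
      have d₂ : p₂ = q₂ ∧ A₂ = p₂ • B₂ := by
        rcases b₂ with ⟨rfl, rfl, h⟩ | ⟨rfl, rfl, h⟩
        · exact ⟨rfl, by simpa using h⟩
        · exact ⟨rfl, by simpa using full _ _ _ hA₂ c₂ h⟩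
      have d₃ : p₃ = q₃ ∧ A₃ = p₃ • B₃ := by
        rcases b₃ with ⟨rfl, rfl, h⟩ | ⟨rfl, rfl, h⟩
        · exact ⟨rfl, by simpa using h⟩
        · exact ⟨rfl, by simpa using full _ _ _ hA₃ c₃ h⟩
      obtain ⟨rfl, rfl⟩ := d₁
      obtain ⟨rfl, rfl⟩ := d₂
      obtain ⟨rfl, rfl⟩ := d₃
      rcases marked p₁ p₂ p₃ hp₁ hp₂ hp₃ (by
        refine Eq.trans ?_ hs
        simp only [Multiset.sum_nsmul, s₁, s₂, s₃, smul_add, smul_neg, smul_zero]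
        abel) with ⟨rfl, rfl, rfl, rfl⟩ | ⟨rfl, rfl, rfl, rfl⟩
      · exact hT0 (by simp)
      · exact hTS (by simp [auxW])
    · have d₁ : q₁ = 1 - p₁ ∧ A₂ = p₁ • B₂ := by
        rcases b₁ with ⟨rfl, rfl, h⟩ | ⟨rfl, rfl, h⟩
        · exact ⟨rfl, by simpa using full _ _ _ hA₂ c₂ h⟩
        · exact ⟨rfl, by simpa using h⟩
      have d₂ : q₂ = 1 - p₂ ∧ A₃ = p₂ • B₃ := by
        rcases b₂ with ⟨rfl, rfl, h⟩ | ⟨rfl, rfl, h⟩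
        · exact ⟨rfl, by simpa using full _ _ _ hA₃ c₃ h⟩
        · exact ⟨rfl, by simpa using h⟩
      have d₃ : q₃ = 1 - p₃ ∧ A₁ = p₃ • B₁ := by
        rcases b₃ with ⟨rfl, rfl, h⟩ | ⟨rfl, rfl, h⟩
        · exact ⟨rfl, by simpa using full _ _ _ hA₁ c₁ h⟩
        · exact ⟨rfl, by simpa using h⟩
      obtain ⟨rfl, rfl⟩ := d₁
      obtain ⟨rfl, rfl⟩ := d₂
      obtain ⟨rfl, rfl⟩ := d₃
      have := marked (1 - p₁) p₁ p₁ hq₁ hp₁ hp₁ (by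
        refine Eq.trans ?_ hs
        simp only [Multiset.sum_nsmul, s₁, s₂, s₃, smul_add, smul_neg, smul_zero]
        abel)
      omega

/-- Proposition: for a finite abelian group `G` with `exp(G) ≥ 3`, `k ∈ ℕ₀` and
integers `3 ≤ n_i ≤ |G| + 1` for `i = 1, 2, 3`:
`SD_k(G ⊕ C_{n_1} ⊕ C_{n_2} ⊕ C_{n_3}) ≥ SD_{k+3}(G) + (n_1−1) + (n_2−1) + (n_3−1)`. -/
theorem SDk_add_three_cyclic (G : Type*) [AddCommGroup G] [Fintype G]
    (hexp : 3 ≤ AddMonoid.exponent G) (k : ℕ) (n₁ n₂ n₃ : ℕ)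
    (h₁ : 3 ≤ n₁) (h₁' : n₁ ≤ Fintype.card G + 1)
    (h₂ : 3 ≤ n₂) (h₂' : n₂ ≤ Fintype.card G + 1)
    (h₃ : 3 ≤ n₃) (h₃' : n₃ ≤ Fintype.card G + 1) :
    SDk G (k + 3) + (n₁ - 1) + (n₂ - 1) + (n₃ - 1) ≤
      SDk (G × ZMod n₁ × ZMod n₂ × ZMod n₃) k := by
  haveI : NeZero n₁ := ⟨by omega⟩
  haveI : NeZero n₂ := ⟨by omega⟩
  haveI : NeZero n₃ := ⟨by omega⟩
  obtain ⟨h, hh⟩ := aux_exp hexp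
  have hbdd := aux_bdd G (k + 3)
  have hmem3 : 3 ∈ {m | ∃ S : Multiset G, IsMinimalZeroSum S ∧ cmul 1 S ≤ k + 3 ∧
      Multiset.card S = m} := by
    refine ⟨_, aux_three h hh, ?_, by simp⟩
    have := aux_cm ({h, h, -(h + h)} : Multiset G)
    have h3 : Multiset.card ({h, h, -(h + h)} : Multiset G) = 3 := by simp
    omega
  have hge : 3 ≤ SDk G (k + 3) := le_csSup hbdd hmem3
  obtain ⟨S, hS, hcm, hcard⟩ := Nat.sSup_mem ⟨3, hmem3⟩ hbdd
  change Multiset.card S = SDk G (k + 3) at hcard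
  obtain ⟨g₁, S₁, rfl, r₁⟩ := aux_pick S (Multiset.card_pos.1 (by omega))
  rw [Multiset.card_cons] at hcard
  obtain ⟨g₂, S₂, rfl, r₂⟩ := aux_pick S₁ (Multiset.card_pos.1 (by omega))
  rw [Multiset.card_cons] at hcard
  obtain ⟨g₃, S₀, rfl, r₃⟩ := aux_pick S₂ (Multiset.card_pos.1 (by omega))
  rw [Multiset.card_cons] at hcard
  have heq : g₁ ::ₘ g₂ ::ₘ g₃ ::ₘ S₀ = S₀ + ({g₁} + {g₂} + {g₃}) := by
    simp only [← Multiset.singleton_add]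
    abel
  rw [heq] at hS
  obtain ⟨B₁, c₁, s₁⟩ := aux_subset_sum h hh (n₁ - 2) (by omega) (by omega) 0
  obtain ⟨B₂, c₂, s₂⟩ := aux_subset_sum h hh (n₂ - 2) (by omega) (by omega) (g₂ + g₃)
  obtain ⟨B₃, c₃, s₃⟩ := aux_subset_sum h hh (n₃ - 2) (by omega) (by omega) g₃
  have hmin := aux_main n₁ n₂ n₃ h₁ h₂ h₃ S₀ g₁ g₂ g₃ hS B₁.val B₂.val B₃.val c₁ c₂ c₃
    (by rw [Finset.sum_val]; exact s₁) (by rw [Finset.sum_val]; exact s₂)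
    (by rw [Finset.sum_val]; exact s₃)
  obtain ⟨w₁, w₂⟩ := auxW_nodup n₁ n₂ n₃ h₁ h₂ h₃ g₁ g₃ B₁.val B₂.val B₃.val
    B₁.nodup B₂.nodup B₃.nodup
  refine le_csSup (aux_bdd _ k) ⟨_, hmin, ?_, ?_⟩
  · refine (aux_cm_add _ _ w₁ ?_).trans ?_
    · intro x hx hx'
      obtain ⟨b, -, rfl⟩ := Multiset.mem_map.1 hx
      exact w₂ _ hx' rfl
    · rw [aux_cm_map _ (fun a b h => congrArg Prod.fst h)]
      omega
  · simp only [auxW, Multiset.card_add, Multiset.card_map, Multiset.card_singleton,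
      Finset.card_val, c₁, c₂, c₃]
    omega
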